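/- arXiv:1805.01559 — 2 statements merged into one kernel-verified Lean document; each statement's English description precedes it below -/
import Mathlib

section
/- (Lemma 1) Let π^{SINR} be a maxSINR association and let Λ_j = Σ_i λ_i π^{SINR}_{ij}. Suppose x* minimizes Σ_{ij} x_{ij}/(μ R_{ij}) over the transportation polytope U(λ, Λ). Then π*_{ij} = x*_{ij}/λ_i is an association (π*_{ij} ≥ 0 and Σ_j π*_{ij} = 1 for every i), and π* minimizes the total load: for every association π, Σ_j ρ_j(π*) ≤ Σ_j ρ_j(π). -/
open Finset

/-- An association: nonnegative entries, each device's fractions sum to 1. -/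
def IsAssociation {m n : ℕ} (π : Matrix (Fin m) (Fin n) ℝ) : Prop :=
  (∀ i j, 0 ≤ π i j) ∧ (∀ i, ∑ j, π i j = 1)

/-- A maxSINR association: `π i j = 0` whenever `R i j < max_k R i k`,
i.e. whenever some station `k` offers device `i` a strictly larger rate. -/
def IsMaxSINR {m n : ℕ} (R π : Matrix (Fin m) (Fin n) ℝ) : Prop :=
  IsAssociation π ∧ ∀ i j, (∃ k, R i j < R i k) → π i j = 0

/-- Membership in the transportation polytope `U(p, q)`. -/
def InPolytope {m n : ℕ} (p : Fin m → ℝ) (q : Fin n → ℝ)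
    (x : Matrix (Fin m) (Fin n) ℝ) : Prop :=
  (∀ i j, 0 ≤ x i j) ∧ (∀ i, ∑ j, x i j = p i) ∧ (∀ j, ∑ i, x i j = q j)

/-- Load of RRH `j` under association `π`. -/
noncomputable def load {m n : ℕ} (lam : Fin m → ℝ) (μ : ℝ)
    (R : Matrix (Fin m) (Fin n) ℝ) (π : Matrix (Fin m) (Fin n) ℝ) (j : Fin n) : ℝ :=
  ∑ i, lam i / (μ * R i j) * π i j

/-!
Every device spends the least time per unit of traffic at its fastest RRHs, so a maxSINR association
already minimizes the total load over all associations, device by device. The traffic matrix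
`λ_i π^{SINR}_{ij}` lies in `U(λ, Λ)`, and the transport cost of a traffic matrix is the total load
of the association obtained by dividing its rows by `λ_i`. Hence a minimizer over `U(λ, Λ)` costs at
most the maxSINR total load.
-/

section StdSimplex

variable {𝕜 E ι : Type*} [Fintype ι] [Semiring 𝕜] [PartialOrder 𝕜] [AddCommMonoid E]
  [PartialOrder E] [IsOrderedAddMonoid E] [Module 𝕜 E] [PosSMulMono 𝕜 E]
  {v w : ι → 𝕜} {a : E} {c : ι → E}

theorem le_sum_smul_of_mem_stdSimplex (hw : w ∈ stdSimplex 𝕜 ι) (h : ∀ j, a ≤ c j) :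
    a ≤ ∑ j, w j • c j :=
  calc a = ∑ j, w j • a := by rw [← sum_smul, hw.2, one_smul]
    _ ≤ ∑ j, w j • c j := sum_le_sum fun j _ => smul_le_smul_of_nonneg_left (h j) (hw.1 j)

theorem sum_smul_le_of_mem_stdSimplex (hw : w ∈ stdSimplex 𝕜 ι) (h : ∀ j, w j ≠ 0 → c j ≤ a) :
    ∑ j, w j • c j ≤ a :=
  calc ∑ j, w j • c j ≤ ∑ j, w j • a := sum_le_sum fun j _ => by
        rcases eq_or_ne (w j) 0 with hj | hj
        · rw [hj, zero_smul, zero_smul]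
        · exact smul_le_smul_of_nonneg_left (h j hj) (hw.1 j)
    _ = a := by rw [← sum_smul, hw.2, one_smul]

theorem sum_smul_le_sum_smul_of_mem_stdSimplex (hw : w ∈ stdSimplex 𝕜 ι)
    (hv : v ∈ stdSimplex 𝕜 ι) (h : ∀ j, w j ≠ 0 → ∀ k, c j ≤ c k) :
    ∑ j, w j • c j ≤ ∑ j, v j • c j :=
  sum_smul_le_of_mem_stdSimplex hw fun j hj => le_sum_smul_of_mem_stdSimplex hv (h j hj)

end StdSimplex

section Association

variable {m n : ℕ} {lam : Fin m → ℝ} {q : Fin n → ℝ} {μ : ℝ}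
  {R π πS x : Matrix (Fin m) (Fin n) ℝ}

theorem IsAssociation.mem_stdSimplex (hπ : IsAssociation π) (i : Fin m) :
    π i ∈ stdSimplex ℝ (Fin n) :=
  ⟨hπ.1 i, hπ.2 i⟩

theorem IsAssociation.inPolytope_mul (hπ : IsAssociation π) (hlam : ∀ i, 0 ≤ lam i) :
    InPolytope lam (fun j => ∑ i, lam i * π i j) (Matrix.of fun i j => lam i * π i j) :=
  ⟨fun i j => mul_nonneg (hlam i) (hπ.1 i j),
    fun i => by simp only [Matrix.of_apply, ← mul_sum, hπ.2, mul_one],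
    fun _ => rfl⟩

theorem InPolytope.isAssociation_div (hx : InPolytope lam q x) (hlam : ∀ i, 0 < lam i) :
    IsAssociation (Matrix.of fun i j => x i j / lam i) :=
  ⟨fun i j => div_nonneg (hx.1 i j) (hlam i).le,
    fun i => by simp only [Matrix.of_apply, ← sum_div, hx.2.1, div_self (hlam i).ne']⟩

theorem sum_load (lam : Fin m → ℝ) (μ : ℝ) (R π : Matrix (Fin m) (Fin n) ℝ) :
    ∑ j, load lam μ R π j = ∑ i, ∑ j, lam i * π i j / (μ * R i j) := by
  simp only [load, mul_div_right_comm]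
  exact sum_comm

theorem IsMaxSINR.rate_le_of_ne_zero (hS : IsMaxSINR R πS) {i : Fin m} {j : Fin n}
    (hij : πS i j ≠ 0) (k : Fin n) : R i k ≤ R i j :=
  not_lt.mp fun hlt => hij (hS.2 i j ⟨k, hlt⟩)

theorem IsMaxSINR.sum_load_le (hS : IsMaxSINR R πS) (hπ : IsAssociation π)
    (hlam : ∀ i, 0 ≤ lam i) (hμ : 0 < μ) (hR : ∀ i j, 0 < R i j) :
    ∑ j, load lam μ R πS j ≤ ∑ j, load lam μ R π j := by
  have cost_le (i : Fin m) (j : Fin n) (hij : πS i j ≠ 0) (k : Fin n) :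
      lam i / (μ * R i j) ≤ lam i / (μ * R i k) :=
    div_le_div_of_nonneg_left (hlam i) (mul_pos hμ (hR i k))
      (mul_le_mul_of_nonneg_left (hS.rate_le_of_ne_zero hij k) hμ.le)
  have device_le (i : Fin m) :
      ∑ j, πS i j * (lam i / (μ * R i j)) ≤ ∑ j, π i j * (lam i / (μ * R i j)) :=
    sum_smul_le_sum_smul_of_mem_stdSimplex (hS.1.mem_stdSimplex i) (hπ.mem_stdSimplex i)
      (cost_le i)
  simp only [sum_load, mul_comm (lam _), mul_div_assoc]
  exact sum_le_sum fun i _ => device_le i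

end Association

/-- Lemma 1: if `x*` minimizes `∑_{ij} x_{ij}/(μ R_{ij})` over
`U(λ, Λ)` with `Λ_j = ∑_i λ_i π^{SINR}_{ij}`, then `π*_{ij} = x*_{ij}/λ_i`
is an association minimizing the total load. -/
theorem stmt_4 (m n : ℕ) (hm : 0 < m) (hn : 0 < n)
    (lam : Fin m → ℝ) (hlam : ∀ i, 0 < lam i)
    (μ : ℝ) (hμ : 0 < μ)
    (R : Matrix (Fin m) (Fin n) ℝ) (hR : ∀ i j, 0 < R i j)
    (πS : Matrix (Fin m) (Fin n) ℝ) (hS : IsMaxSINR R πS)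
    (Λ : Fin n → ℝ) (hΛ : ∀ j, Λ j = ∑ i, lam i * πS i j)
    (xstar : Matrix (Fin m) (Fin n) ℝ)
    (hfeas : InPolytope lam Λ xstar)
    (hopt : ∀ x, InPolytope lam Λ x →
      ∑ i, ∑ j, xstar i j / (μ * R i j) ≤ ∑ i, ∑ j, x i j / (μ * R i j))
    (πstar : Matrix (Fin m) (Fin n) ℝ)
    (hπstar : ∀ i j, πstar i j = xstar i j / lam i) :
    IsAssociation πstar ∧
      ∀ π, IsAssociation π →
        ∑ j, load lam μ R πstar j ≤ ∑ j, load lam μ R π j := by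
  obtain rfl : Λ = fun j => ∑ i, lam i * πS i j := funext hΛ
  obtain rfl : πstar = Matrix.of fun i j => xstar i j / lam i := Matrix.ext hπstar
  refine ⟨hfeas.isAssociation_div hlam, fun π hπ => ?_⟩
  calc ∑ j, load lam μ R (Matrix.of fun i j => xstar i j / lam i) j
      = ∑ i, ∑ j, xstar i j / (μ * R i j) := by
        simp only [sum_load, Matrix.of_apply, mul_div_cancel₀ _ (hlam _).ne']
    _ ≤ ∑ i, ∑ j, lam i * πS i j / (μ * R i j) :=
        hopt _ (hS.1.inPolytope_mul fun i => (hlam i).le)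
    _ = ∑ j, load lam μ R πS j := (sum_load lam μ R πS).symm
    _ ≤ ∑ j, load lam μ R π j := hS.sum_load_le hπ (fun i => (hlam i).le) hμ hR
end

section
/- Let C ∈ ℝ^{m×n} and let p ∈ ℝ^m, q ∈ ℝ^n have nonnegative entries with Σ_i p_i = Σ_j q_j and U(p,q) nonempty. Let ε_k > 0 be a sequence with ε_k → 0, and for each k let π^k be a minimizer of the regularized OT objective F_{ε_k} over U(p,q). If π^k converges to a matrix π̄ as k → ∞, then π̄ ∈ U(p,q) and π̄ minimizes the unregularized OT cost Σ_{ij} C_{ij} x_{ij} over U(p,q). -/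
open Finset Filter Topology

/-- The entropically regularized OT objective `F_ε`; with `Real.log 0 = 0`,
the convention `0·(log 0 − 1) = 0` holds automatically. -/
noncomputable def regObj {m n : ℕ} (C : Matrix (Fin m) (Fin n) ℝ) (ε : ℝ)
    (x : Matrix (Fin m) (Fin n) ℝ) : ℝ :=
  ∑ i, ∑ j, C i j * x i j + ε * ∑ i, ∑ j, x i j * (Real.log (x i j) - 1)

/-!
A pointwise limit of objectives keeps minimality of a limit of minimizers as soon as the minimal
values converge to the value of the limit objective at the limit point. For `F_ε` this holds as
`ε → 0` because the entropic term, being continuous up to the boundary of the orthant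
(`t log t → 0` as `t → 0`), stays bounded along the convergent sequence of minimizers and is
killed by the factor `ε`.
-/

section LimitsOfMinimizers

variable {ι X β : Type*} [TopologicalSpace β] [Preorder β] [OrderClosedTopology β]
  {l : Filter ι} [l.NeBot] {s : Set X} {x : ι → X} {a : X}

theorem isMinOn_of_tendsto {F : ι → X → β} {f : X → β}
    (hmin : ∀ᶠ k in l, IsMinOn (F k) s (x k))
    (hval : Tendsto (fun k => F k (x k)) l (𝓝 (f a)))
    (hpt : ∀ y ∈ s, Tendsto (fun k => F k y) l (𝓝 (f y))) :
    IsMinOn f s a :=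
  isMinOn_iff.2 fun y hy =>
    le_of_tendsto_of_tendsto hval (hpt y hy) (hmin.mono fun _ hk => isMinOn_iff.1 hk y hy)

theorem isMinOn_of_tendsto_of_isMinOn_add_smul {𝕜 : Type*} [TopologicalSpace 𝕜]
    [Zero 𝕜] [AddMonoid β] [ContinuousAdd β] [SMulWithZero 𝕜 β] [ContinuousSMul 𝕜 β]
    [TopologicalSpace X] {f g : X → β} {ε : ι → 𝕜}
    (hf : ContinuousWithinAt f s a) (hg : ContinuousWithinAt g s a)
    (hε : Tendsto ε l (𝓝 0)) (hx : Tendsto x l (𝓝[s] a))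
    (hmin : ∀ᶠ k in l, IsMinOn (fun y => f y + ε k • g y) s (x k)) :
    IsMinOn f s a := by
  refine isMinOn_of_tendsto hmin ?_ fun y _ => ?_
  · simpa only [Function.comp_apply, zero_smul, add_zero] using
      (hf.tendsto.comp hx).add (hε.smul (hg.tendsto.comp hx))
  · simpa only [zero_smul, add_zero] using
      (tendsto_const_nhds (x := f y)).add (hε.smul (tendsto_const_nhds (x := g y)))

end LimitsOfMinimizers

section Objective

variable {I J : Type*} [Fintype I] [Fintype J]

/-- The unregularized OT cost `∑_{ij} C_{ij} x_{ij}`. -/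
def transportCost (C x : Matrix I J ℝ) : ℝ :=
  ∑ i, ∑ j, C i j * x i j

/-- The entropic regularizer `∑_{ij} x_{ij} (log x_{ij} - 1)`, a negative entropy, which `F_ε`
adds to the OT cost with weight `ε`. -/
noncomputable def entropicRegularizer (x : Matrix I J ℝ) : ℝ :=
  ∑ i, ∑ j, x i j * (Real.log (x i j) - 1)

theorem continuous_transportCost (C : Matrix I J ℝ) : Continuous (transportCost C) := by
  unfold transportCost
  fun_prop

theorem continuous_mul_log_sub_one : Continuous fun t : ℝ => t * (Real.log t - 1) := by
  simpa only [mul_sub, mul_one] using Real.continuous_mul_log.fun_sub continuous_id'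

theorem continuous_entropicRegularizer :
    Continuous (entropicRegularizer : Matrix I J ℝ → ℝ) :=
  continuous_finsetSum _ fun i _ => continuous_finsetSum _ fun j _ =>
    continuous_mul_log_sub_one.comp (continuous_id.matrix_elem i j)

end Objective

theorem regObj_eq_transportCost_add_smul {m n : ℕ} (C : Matrix (Fin m) (Fin n) ℝ) (ε : ℝ)
    (x : Matrix (Fin m) (Fin n) ℝ) :
    regObj C ε x = transportCost C x + ε • entropicRegularizer x :=
  rfl

theorem isClosed_setOf_inPolytope {m n : ℕ} (p : Fin m → ℝ) (q : Fin n → ℝ) :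
    IsClosed {x | InPolytope p q x} := by
  simp only [InPolytope, Set.ofPred_and, Set.ofPred_forall]
  refine .inter ?nonneg (.inter ?row_sums ?col_sums)
  case nonneg =>
    exact isClosed_iInter fun i => isClosed_iInter fun j =>
      isClosed_le continuous_const (continuous_id.matrix_elem i j)
  case row_sums =>
    exact isClosed_iInter fun i => isClosed_eq
      (continuous_finsetSum _ fun j _ => continuous_id.matrix_elem i j) continuous_const
  case col_sums =>
    exact isClosed_iInter fun j => isClosed_eq
      (continuous_finsetSum _ fun i _ => continuous_id.matrix_elem i j) continuous_const

/-- if `ε_k → 0`, `π^k` minimizes `F_{ε_k}` over `U(p, q)` for each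
`k`, and `π^k → π̄`, then `π̄ ∈ U(p, q)` and `π̄` minimizes the unregularized OT
cost `∑_{ij} C_{ij} x_{ij}` over `U(p, q)`. -/
theorem stmt_15 (m n : ℕ) (C : Matrix (Fin m) (Fin n) ℝ)
    (p : Fin m → ℝ) (q : Fin n → ℝ) (hp : ∀ i, 0 ≤ p i) (hq : ∀ j, 0 ≤ q j)
    (hbal : ∑ i, p i = ∑ j, q j)
    (hne : ∃ x : Matrix (Fin m) (Fin n) ℝ, InPolytope p q x)
    (ε : ℕ → ℝ) (hε : ∀ k, 0 < ε k) (hε0 : Tendsto ε atTop (𝓝 0))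
    (π : ℕ → Matrix (Fin m) (Fin n) ℝ)
    (hfeas : ∀ k, InPolytope p q (π k))
    (hopt : ∀ k, ∀ x, InPolytope p q x → regObj C (ε k) (π k) ≤ regObj C (ε k) x)
    (πbar : Matrix (Fin m) (Fin n) ℝ)
    (hlim : Tendsto π atTop (𝓝 πbar)) :
    InPolytope p q πbar ∧
      ∀ x, InPolytope p q x →
        ∑ i, ∑ j, C i j * πbar i j ≤ ∑ i, ∑ j, C i j * x i j := by
  have hmem : ∀ᶠ k in atTop, π k ∈ {x | InPolytope p q x} := .of_forall hfeas
  have hmin : ∀ k, IsMinOn (fun x => transportCost C x + ε k • entropicRegularizer x)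
      {x | InPolytope p q x} (π k) := by
    simpa only [isMinOn_iff, Set.mem_ofPred_eq, regObj_eq_transportCost_add_smul] using hopt
  have hbar : IsMinOn (transportCost C) {x | InPolytope p q x} πbar :=
    isMinOn_of_tendsto_of_isMinOn_add_smul (continuous_transportCost C).continuousWithinAt
      continuous_entropicRegularizer.continuousWithinAt hε0
      (tendsto_nhdsWithin_iff.2 ⟨hlim, hmem⟩) (.of_forall hmin)
  exact ⟨(isClosed_setOf_inPolytope p q).mem_of_tendsto hlim hmem, isMinOn_iff.1 hbar⟩
end
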